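/- For every complex number z with |z| < 1, (2√π/Γ(3/4)²)·₂F₁(1/4,1/4;1/2;z²) = ₂F₁(1/2,1/2;1;(1-z)/2) + ₂F₁(1/2,1/2;1;(1+z)/2). -/

import Mathlib

open Complex

/-- The Gauss hypergeometric series `₂F₁(a, b; c; z) = ∑_{n≥0} (a)_n (b)_n / ((c)_n n!) zⁿ`. -/
noncomputable def hyp2F1 (a b c z : ℂ) : ℂ :=
  ∑' n : ℕ, (ascPochhammer ℂ n).eval a * (ascPochhammer ℂ n).eval b /
    ((ascPochhammer ℂ n).eval c * (n.factorial : ℂ)) * z ^ n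

/-- Real rising factorial as a product. -/
noncomputable def qtP (s : ℝ) (n : ℕ) : ℝ := ∏ j ∈ Finset.range n, (s + j)

/-- Coefficients of `₂F₁(1/2,1/2;1;·)`. -/
noncomputable def qtC (n : ℕ) : ℝ := qtP (1/2) n ^ 2 / (n.factorial : ℝ) ^ 2

/-- Coefficients of `₂F₁(1/4,1/4;1/2;·)`. -/
noncomputable def qtU (n : ℕ) : ℝ := qtP (1/4) n ^ 2 / (qtP (1/2) n * (n.factorial : ℝ))

/-- Terms of the re-expanded series. -/
noncomputable def qtT (m n : ℕ) : ℝ := qtC n * (1/2) ^ n * (n.choose m : ℝ)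

/-- Re-expanded coefficients. -/
noncomputable def qtD (m : ℕ) : ℝ := ∑' n, qtT m n

lemma qtP_succ (s : ℝ) (n : ℕ) : qtP s (n+1) = qtP s n * (s + n) := by
  simp [qtP, Finset.prod_range_succ]

lemma qtP_pos {s : ℝ} (hs : 0 < s) (n : ℕ) : 0 < qtP s n := by
  unfold qtP
  exact Finset.prod_pos fun j _ => by positivity

lemma qtP_cast (s : ℝ) (n : ℕ) : (ascPochhammer ℂ n).eval (s : ℂ) = (qtP s n : ℂ) := by
  induction n with
  | zero => simp [qtP]
  | succ n ih => rw [ascPochhammer_succ_eval, ih, qtP_succ]; push_cast; ring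

lemma qtC_succ (n : ℕ) : qtC (n+1) * ((n:ℝ)+1)^2 = ((n:ℝ)+1/2)^2 * qtC n := by
  unfold qtC
  rw [qtP_succ, Nat.factorial_succ]
  have : (n.factorial : ℝ) ≠ 0 := by positivity
  push_cast
  field_simp
  ring

lemma qtC_nonneg (n : ℕ) : 0 ≤ qtC n := by unfold qtC; positivity

lemma qtC_le_one (n : ℕ) : qtC n ≤ 1 := by
  induction n with
  | zero => simp [qtC, qtP]
  | succ n ih =>
    have h := qtC_succ n
    have h0 := qtC_nonneg n
    have hn : (0:ℝ) ≤ n := by positivity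
    have h2 : ((n:ℝ)+1/2)^2 * qtC n ≤ ((n:ℝ)+1)^2 * 1 := by gcongr; norm_num
    rw [← h] at h2
    have h3 : (0:ℝ) < ((n:ℝ)+1)^2 := by positivity
    nlinarith

lemma qt_choose1 (n m : ℕ) : (n.choose (m+1) : ℝ) * (m+1) = n.choose m * ((n:ℝ) - m) := by
  rcases le_or_gt m n with h | h
  · have := Nat.choose_succ_right_eq n m
    have h2 := congrArg (Nat.cast : ℕ → ℝ) this
    push_cast [Nat.cast_sub h] at h2
    exact h2
  · simp [Nat.choose_eq_zero_of_lt h, Nat.choose_eq_zero_of_lt (Nat.lt_succ_of_lt h)]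

lemma qt_choose2 (n m : ℕ) :
    (n.choose m : ℝ) * (n+1) = (n+1).choose m * ((n:ℝ) + 1 - m) := by
  rcases le_or_gt m (n+1) with h | h
  · have := Nat.choose_mul_succ_eq n m
    have h2 := congrArg (Nat.cast : ℕ → ℝ) this
    push_cast [Nat.cast_sub h] at h2
    exact h2
  · simp [Nat.choose_eq_zero_of_lt h, Nat.choose_eq_zero_of_lt (Nat.lt_of_succ_lt h)]

lemma qtT_nonneg (m n : ℕ) : 0 ≤ qtT m n := by
  unfold qtT
  have := qtC_nonneg n
  positivity

lemma qtT_le (m n : ℕ) : qtT m n ≤ (n:ℝ)^m * (1/2)^n := by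
  unfold qtT
  have h1 := qtC_le_one n
  have h0 := qtC_nonneg n
  have h2 : (n.choose m : ℝ) ≤ (n:ℝ)^m := by exact_mod_cast Nat.choose_le_pow n m
  calc qtC n * (1/2)^n * (n.choose m : ℝ) ≤ 1 * (1/2)^n * (n:ℝ)^m := by gcongr
    _ = _ := by ring

lemma qtT_summable (m : ℕ) : Summable (qtT m) :=
  Summable.of_nonneg_of_le (qtT_nonneg m) (qtT_le m)
    (summable_pow_mul_geometric_of_norm_lt_one m (by norm_num))

lemma qtD_rec (m : ℕ) :
    ((m:ℝ)+1) * ((m:ℝ)+2) * qtD (m+2) = ((m:ℝ)+1/2)^2 * qtD m := by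
  set S : ℕ → ℝ := fun n => -2 * n * ((n:ℝ) - m) * qtT m n with hS
  have hstep : ∀ n, ((m:ℝ)+1) * ((m:ℝ)+2) * qtT (m+2) n - ((m:ℝ)+1/2)^2 * qtT m n
      = S (n+1) - S n := by
    intro n
    have e1 := qt_choose1 n m
    have e2 := qt_choose1 n (m+1)
    have e3 := qt_choose2 n m
    have e4 := qtC_succ n
    simp only [hS, qtT]
    push_cast at *
    have f1 : ((m:ℝ)+1) * ((m:ℝ)+2) * (n.choose (m+2) : ℝ)
        = (n.choose m : ℝ) * ((n:ℝ)-m) * ((n:ℝ) - m - 1) := by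
      linear_combination ((m:ℝ)+1) * e2 + ((n:ℝ) - m - 1) * e1
    have f2 : -2 * ((n:ℝ)+1) * ((n:ℝ) + 1 - m) * (qtC (n+1) * (1/2)^(n+1) * ((n+1).choose m : ℝ))
        = - (((n:ℝ)+1/2)^2 * qtC n) * (1/2)^n * n.choose m := by
      rw [pow_succ]
      linear_combination (qtC (n+1) * (1/2)^n * ((n:ℝ)+1)) * e3
        - (1/2)^n * (n.choose m : ℝ) * e4
    rw [f2]
    linear_combination qtC n * (1/2)^n * f1
  have hS0 : S 0 = 0 := by simp [hS]
  have hlim : Filter.Tendsto S Filter.atTop (nhds 0) := by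
    have hb : Filter.Tendsto (fun n : ℕ => 2 * ((n:ℝ)^(m+2) * (1/2)^n) + 2 * m * ((n:ℝ)^(m+1) * (1/2)^n))
        Filter.atTop (nhds (2 * 0 + 2 * m * 0)) :=
      ((tendsto_pow_const_mul_const_pow_of_abs_lt_one (m+2) (by norm_num [abs_of_pos])).const_mul _).add
        ((tendsto_pow_const_mul_const_pow_of_abs_lt_one (m+1) (by norm_num [abs_of_pos])).const_mul _)
    simp only [mul_zero, add_zero] at hb
    refine squeeze_zero_norm (fun n => ?_) hb
    have h1 := qtT_le m n
    have h0 := qtT_nonneg m n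
    have h3 : ‖((n:ℝ) - m)‖ ≤ n + m := by
      refine (norm_sub_le _ _).trans ?_
      simp
    calc ‖S n‖ = 2 * n * ‖((n:ℝ) - m)‖ * qtT m n := by
          simp only [hS, norm_mul, norm_neg, Real.norm_natCast, Real.norm_of_nonneg h0]; norm_num
      _ ≤ 2 * n * (n + m) * ((n:ℝ)^m * (1/2)^n) := by gcongr
      _ = _ := by ring
  have hsum : Summable fun n => ((m:ℝ)+1) * ((m:ℝ)+2) * qtT (m+2) n - ((m:ℝ)+1/2)^2 * qtT m n :=
    ((qtT_summable (m+2)).mul_left _).sub ((qtT_summable m).mul_left _)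
  have ht := hsum.hasSum.tendsto_sum_nat
  simp only [hstep, Finset.sum_range_sub, hS0, sub_zero] at ht
  have hz := tendsto_nhds_unique ht hlim
  have h2 : ∑' n, (((m:ℝ)+1) * ((m:ℝ)+2) * qtT (m+2) n - ((m:ℝ)+1/2)^2 * qtT m n) = 0 := by
    simp only [hstep]; exact hz
  rw [((qtT_summable (m+2)).mul_left _).tsum_sub ((qtT_summable m).mul_left _),
    tsum_mul_left, tsum_mul_left] at h2
  unfold qtD
  linarith

lemma qtD_even (k : ℕ) : qtD (2*k) = qtD 0 * qtU k := by
  induction k with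
  | zero => simp [qtU, qtP]
  | succ k ih =>
    have h := qtD_rec (2*k)
    rw [ih] at h
    have hU : qtU (k+1) * (((k:ℝ)+1/2) * (k+1)) = ((k:ℝ)+1/4)^2 * qtU k := by
      unfold qtU
      rw [qtP_succ, qtP_succ, Nat.factorial_succ]
      have h1 : (k.factorial : ℝ) ≠ 0 := by positivity
      have h2 := (qtP_pos (s := 1/2) (by norm_num) k).ne'
      have h3 : (1/2 + (k:ℝ)) ≠ 0 := by positivity
      have h4 : ((k:ℝ)+1) ≠ 0 := by positivity
      push_cast
      rw [div_mul_eq_mul_div, mul_div_assoc', div_eq_div_iff (by positivity) (by positivity)]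
      ring
    have e : 2*(k+1) = 2*k+2 := by ring
    rw [e]
    have hp : (((k:ℝ)+1/2) * (k+1)) ≠ 0 := by positivity
    apply mul_right_cancel₀ hp
    push_cast at h
    linear_combination h/4 - qtD 0 * hU

lemma qtP_gamma {s : ℝ} (hs : 0 < s) {n : ℕ} :
    Real.GammaSeq s n * qtP s (n+1) = (n:ℝ)^s * n.factorial := by
  have := (qtP_pos hs (n+1)).ne'
  unfold Real.GammaSeq
  unfold qtP at *
  field_simp

lemma qtC_lim : Filter.Tendsto (fun n : ℕ => (n:ℝ) * qtC n) Filter.atTop (nhds (1/Real.pi)) := by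
  rw [← Filter.tendsto_add_atTop_iff_nat 1]
  have hg := Real.GammaSeq_tendsto_Gamma (1/2)
  rw [Real.Gamma_one_half_eq] at hg
  have h1 : Filter.Tendsto (fun n : ℕ => ((n:ℝ)/(n+1)) / (Real.GammaSeq (1/2) n)^2) Filter.atTop
      (nhds (1 / (Real.sqrt Real.pi)^2)) :=
    (tendsto_natCast_div_add_atTop (1:ℝ)).div (hg.pow 2) (by positivity)
  rw [Real.sq_sqrt Real.pi_pos.le] at h1
  refine h1.congr' ?_
  filter_upwards [Filter.eventually_gt_atTop 0] with n hn
  have hp := qtP_gamma (s := 1/2) (by norm_num) (n := n)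
  have hpp := qtP_pos (s := 1/2) (by norm_num) (n+1)
  have hn' : (0:ℝ) < n := by exact_mod_cast hn
  have hG : Real.GammaSeq (1/2) n ≠ 0 := by
    intro h; rw [h, zero_mul] at hp
    have : (0:ℝ) < (n:ℝ)^(1/2:ℝ) * n.factorial := by positivity
    linarith
  have hsq : ((n:ℝ)^(1/2:ℝ))^2 = n := by
    rw [← Real.sqrt_eq_rpow, Real.sq_sqrt hn'.le]
  have hf : (n.factorial : ℝ) ≠ 0 := by positivity
  have key : (Real.GammaSeq (1/2) n)^2 * qtP (1/2) (n+1)^2 = n * (n.factorial:ℝ)^2 := by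
    rw [← mul_pow, hp, mul_pow, hsq]
  unfold qtC
  rw [Nat.factorial_succ]
  push_cast
  field_simp
  linear_combination -key

lemma qtU_lim : Filter.Tendsto (fun n : ℕ => (n:ℝ) * qtU n) Filter.atTop
    (nhds (Real.sqrt Real.pi/Real.Gamma (1/4)^2)) := by
  rw [← Filter.tendsto_add_atTop_iff_nat 1]
  have hg := Real.GammaSeq_tendsto_Gamma (1/2)
  rw [Real.Gamma_one_half_eq] at hg
  have hg4 := Real.GammaSeq_tendsto_Gamma (1/4)
  have hG4 : 0 < Real.Gamma (1/4) := Real.Gamma_pos_of_pos (by norm_num)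
  have h1 : Filter.Tendsto (fun n : ℕ => Real.GammaSeq (1/2) n / (Real.GammaSeq (1/4) n)^2) Filter.atTop
      (nhds (Real.sqrt Real.pi / (Real.Gamma (1/4))^2)) :=
    hg.div (hg4.pow 2) (by positivity)
  refine h1.congr' ?_
  filter_upwards [Filter.eventually_gt_atTop 0] with n hn
  have hp := qtP_gamma (s := 1/2) (by norm_num) (n := n)
  have hq := qtP_gamma (s := 1/4) (by norm_num) (n := n)
  have hpp := qtP_pos (s := 1/2) (by norm_num) (n+1)
  have hn' : (0:ℝ) < n := by exact_mod_cast hn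
  have hG : Real.GammaSeq (1/4) n ≠ 0 := by
    intro h; rw [h, zero_mul] at hq
    have : (0:ℝ) < (n:ℝ)^(1/4:ℝ) * n.factorial := by positivity
    linarith
  have hsq : ((n:ℝ)^(1/4:ℝ))^2 = (n:ℝ)^(1/2:ℝ) := by
    rw [← Real.rpow_natCast, ← Real.rpow_mul hn'.le]; norm_num
  have hf : (n.factorial : ℝ) ≠ 0 := by positivity
  have key : (Real.GammaSeq (1/4) n)^2 * qtP (1/4) (n+1)^2
      = Real.GammaSeq (1/2) n * qtP (1/2) (n+1) * n.factorial := by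
    rw [← mul_pow, hq, mul_pow, hsq, hp]; ring
  unfold qtU
  rw [Nat.factorial_succ]
  push_cast
  field_simp
  linear_combination -key

lemma qtD_lim : Filter.Tendsto (fun n : ℕ => (n:ℝ) * qtD n) Filter.atTop (nhds (1/Real.pi)) := by
  rw [← Filter.tendsto_add_atTop_iff_nat 1, Metric.tendsto_atTop]
  intro ε hε
  obtain ⟨N, hN⟩ := Metric.tendsto_atTop.1 qtC_lim (ε/2) (by positivity)
  refine ⟨N, fun m hm => ?_⟩
  set w : ℕ → ℝ := fun j => ((j+m).choose m : ℝ) * (1/2)^j * (1/2)^(m+1) with hw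
  have hw0 : ∀ j, 0 ≤ w j := fun j => by simp only [hw]; positivity
  have hws : HasSum w 1 := by
    have := (hasSum_choose_mul_geometric_of_norm_lt_one (𝕜 := ℝ) m (r := 1/2) (by norm_num)).mul_right
      ((1/2)^(m+1))
    have e : (1 / (1 - 1/2:ℝ)^(m+1) * (1/2)^(m+1)) = 1 := by
      rw [show (1 - 1/2:ℝ) = 1/2 by norm_num]
      field_simp
    rw [e] at this
    exact this
  have hds : HasSum (fun j => (((j+(m+1):ℕ):ℝ) * qtC (j+(m+1))) * w j) (((m+1:ℕ):ℝ) * qtD (m+1)) := by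
    have h := (qtT_summable (m+1)).hasSum
    rw [← hasSum_nat_add_iff' (m+1)] at h
    have hz : ∑ i ∈ Finset.range (m+1), qtT (m+1) i = 0 := by
      apply Finset.sum_eq_zero
      intro i hi
      simp [qtT, Nat.choose_eq_zero_of_lt (Finset.mem_range.1 hi)]
    rw [hz, sub_zero] at h
    have h' := h.mul_left ((m+1:ℕ):ℝ)
    suffices hh : (fun j => (((j+(m+1):ℕ):ℝ) * qtC (j+(m+1))) * w j)
        = fun j => ((m+1:ℕ):ℝ) * qtT (m+1) (j+(m+1)) by
      rw [hh]; exact h'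
    funext j
    have := congrArg (Nat.cast : ℕ → ℝ) (Nat.add_one_mul_choose_eq (j+m) m)
    simp only [hw, qtT, ← add_assoc]
    push_cast at *
    rw [show j + m + 1 = j + (m+1) by ring, pow_add] at *
    linear_combination (qtC (j+(m+1)) * (1/2)^j * (1/2)^(m+1)) * this
  have hdiff := hds.sub (hws.mul_left (1/Real.pi))
  rw [mul_one] at hdiff
  rw [Real.dist_eq, ← Real.norm_eq_abs, ← hdiff.tsum_eq]
  refine lt_of_le_of_lt (tsum_of_norm_bounded (hws.mul_left (ε/2)) fun j => ?_) (by linarith)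
  rw [← sub_mul, norm_mul, Real.norm_of_nonneg (hw0 j)]
  have := hN (j+(m+1)) (by omega)
  rw [Real.dist_eq] at this
  exact mul_le_mul_of_nonneg_right this.le (hw0 j)

lemma qtD_zero : 2 * qtD 0 = 2 * Real.sqrt Real.pi / Real.Gamma (3/4)^2 := by
  have h1 : Filter.Tendsto (fun k : ℕ => ((2*k:ℕ):ℝ) * qtD (2*k)) Filter.atTop (nhds (1/Real.pi)) :=
    qtD_lim.comp (Filter.tendsto_id.const_mul_atTop' (by norm_num))
  have h2 := qtU_lim.const_mul (2 * qtD 0)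
  have h3 := tendsto_nhds_unique (h1.congr fun k => by rw [qtD_even]; push_cast; ring) h2
  have hr := Real.Gamma_mul_Gamma_one_sub (1/4)
  rw [show Real.pi * (1/4) = Real.pi/4 by ring, Real.sin_pi_div_four,
    show (1:ℝ) - 1/4 = 3/4 by norm_num] at hr
  have hG4 : 0 < Real.Gamma (1/4) := Real.Gamma_pos_of_pos (by norm_num)
  have hG3 : 0 < Real.Gamma (3/4) := Real.Gamma_pos_of_pos (by norm_num)
  have hpi := Real.pi_pos
  have hsp : 0 < Real.sqrt Real.pi := by positivity
  have hs := Real.sq_sqrt hpi.le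
  have hs2 : Real.sqrt 2 ^ 2 = 2 := Real.sq_sqrt (by norm_num)
  have hr2 : Real.Gamma (1/4)^2 * Real.Gamma (3/4)^2 = 2 * Real.pi^2 := by
    rw [← mul_pow, hr, div_pow, div_pow, hs2]; ring
  have h4 : Real.Gamma (1/4)^2 = Real.pi * (2 * qtD 0) * Real.sqrt Real.pi := by
    field_simp at h3
    linarith
  rw [eq_div_iff (by positivity)]
  have : Real.pi * Real.sqrt Real.pi ≠ 0 := by positivity
  apply mul_left_cancel₀ this
  linear_combination hr2 - Real.Gamma (3/4)^2 * h4 - 2 * Real.pi * hs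

lemma qt_hypF (x : ℂ) : hyp2F1 (1/2) (1/2) 1 x = ∑' n, (qtC n : ℂ) * x^n := by
  unfold hyp2F1
  refine tsum_congr fun n => ?_
  have := qtP_cast (1/2) n
  push_cast at this
  rw [this, ascPochhammer_eval_one]
  simp only [qtC]
  push_cast
  ring

lemma qt_hypU (x : ℂ) : hyp2F1 (1/4) (1/4) (1/2) x = ∑' n, (qtU n : ℂ) * x^n := by
  unfold hyp2F1
  refine tsum_congr fun n => ?_
  have h := qtP_cast (1/2) n
  have h' := qtP_cast (1/4) n
  push_cast at h h'
  rw [h, h']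
  simp only [qtU]
  push_cast
  ring

lemma qt_inner {R : Type*} [NormedField R] (a : R) (x : R) (n : ℕ) :
    HasSum (fun m : ℕ => a * (n.choose m : R) * x^m) (a * (1+x)^n) := by
  have : (a * (1+x)^n) = ∑ m ∈ Finset.range (n+1), a * (n.choose m : R) * x^m := by
    rw [add_comm, add_pow, Finset.mul_sum]
    exact Finset.sum_congr rfl fun m _ => by rw [one_pow]; ring
  rw [this]
  apply hasSum_sum_of_ne_finset_zero
  intro m hm
  rw [Finset.mem_range, not_lt] at hm
  simp [Nat.choose_eq_zero_of_lt (Nat.lt_of_succ_le hm)]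

lemma qt_expand (x : ℂ) (hx : ‖x‖ < 1) :
    HasSum (fun m : ℕ => (qtD m : ℂ) * x^m) (hyp2F1 (1/2) (1/2) 1 ((1+x)/2)) := by
  set f : ℕ → ℕ → ℂ := fun n m => ((qtC n : ℂ) * (1/2)^n) * (n.choose m : ℂ) * x^m with hf
  have hnorm : ∀ n m, ‖f n m‖ = (qtC n * (1/2)^n) * (n.choose m : ℝ) * ‖x‖^m := by
    intro n m
    simp [hf, abs_of_nonneg (qtC_nonneg n)]
  have hs : Summable (Function.uncurry f) := by
    apply Summable.of_norm
    rw [summable_prod_of_nonneg (fun _ => norm_nonneg _)]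
    simp only [Function.uncurry, hnorm]
    refine ⟨fun n => (qt_inner _ _ n).summable, ?_⟩
    simp only [(qt_inner _ _ _).tsum_eq]
    refine Summable.of_nonneg_of_le (fun n => ?_) (fun n => ?_)
      (summable_geometric_of_lt_one (r := (1+‖x‖)/2) (by positivity) (by linarith))
    · have := qtC_nonneg n
      positivity
    · have h1 := qtC_le_one n
      calc qtC n * (1/2)^n * (1+‖x‖)^n ≤ 1 * (1/2)^n * (1+‖x‖)^n := by gcongr
        _ = _ := by rw [one_mul, ← mul_pow]; ring
  have hcol : ∀ m, ∑' n, f n m = (qtD m : ℂ) * x^m := by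
    intro m
    simp only [hf]
    rw [tsum_mul_right, qtD, Complex.ofReal_tsum]
    simp [qtT]
  have hsum : Summable (fun m : ℕ => (qtD m : ℂ) * x^m) := by
    have := hs.prod_symm.prod
    simpa [Function.uncurry, hcol] using this
  have heq : ∑' m, (qtD m : ℂ) * x^m = hyp2F1 (1/2) (1/2) 1 ((1+x)/2) := by
    rw [qt_hypF]
    simp only [← hcol]
    rw [hs.tsum_comm]
    refine tsum_congr fun n => ?_
    rw [(qt_inner _ _ _).tsum_eq, mul_assoc, ← mul_pow]
    ring
  rw [← heq]
  exact hsum.hasSum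

/-- The quadratic transformation (DLMF 15.8.27 with `a = b = 1/4`): for `|z| < 1`,
`(2√π/Γ(3/4)²) ₂F₁(1/4,1/4;1/2;z²) = ₂F₁(1/2,1/2;1;(1-z)/2) + ₂F₁(1/2,1/2;1;(1+z)/2)`. -/
theorem hyp2F1_quadratic_transformation_sum (z : ℂ) (hz : ‖z‖ < 1) :
    (2 * (Real.sqrt Real.pi : ℂ) / (Complex.Gamma (3/4)) ^ 2) *
      hyp2F1 (1/4) (1/4) (1/2) (z ^ 2) =
    hyp2F1 (1/2) (1/2) 1 ((1 - z) / 2) + hyp2F1 (1/2) (1/2) 1 ((1 + z) / 2) := by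
  have h1 := qt_expand z hz
  have h2 := qt_expand (-z) (by simpa using hz)
  rw [← sub_eq_add_neg] at h2
  have h := h2.add h1
  rw [← h.tsum_eq, qt_hypU]
  have hinj : Function.Injective (fun k : ℕ => 2 * k) := fun a b hab => by
    simpa using hab
  have hG : Complex.Gamma (3/4) = (Real.Gamma (3/4) : ℂ) := by
    rw [← Complex.Gamma_ofReal]; push_cast; rfl
  have hc : (2 * (Real.sqrt Real.pi : ℂ) / (Complex.Gamma (3/4)) ^ 2) = ((2 * qtD 0 : ℝ) : ℂ) := by
    rw [qtD_zero, hG]; push_cast; rfl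
  rw [hc, ← tsum_mul_left, ← hinj.tsum_eq (f := fun b => (qtD b : ℂ) * (-z)^b + (qtD b : ℂ) * z^b)]
  · refine tsum_congr fun k => ?_
    simp only [qtD_even, pow_mul, neg_sq]
    push_cast
    ring
  · intro m hm
    rcases Nat.even_or_odd m with he | ho
    · obtain ⟨k, rfl⟩ := he
      exact ⟨k, by simp; ring⟩
    · exfalso
      apply hm
      simp [ho.neg_pow]
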